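/- For all s, t ≥ 0 and all x, y ∈ [0,1], the kernel K satisfies the Chapman–Kolmogorov-type relation K_{s+t}(x,y) = e^{−t}·K_s(x,y) + e^{−s}·K_t(x,y) + ∫₀¹ K_t(x,z)·K_s(z,y) dz. -/

import Mathlib

open MeasureTheory

/-- The unit interval `[0,1]` as a (compact) subspace of `ℝ`. -/
abbrev I01 := Set.Icc (0:ℝ) 1

/-- Lebesgue measure on `[0,1]`, viewed as a measure on the subtype. -/
noncomputable def muI : Measure I01 := Measure.comap Subtype.val volume

/-- The iterated kernels `P¹ = P`, `P^{k+1}(x,y) = ∫₀¹ P^k(x,z)·P(z,y) dz`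
(`Pit P k` is `P^{k+1}`). -/
noncomputable def Pit (P : I01 → I01 → ℝ) : ℕ → I01 → I01 → ℝ
  | 0 => P
  | n + 1 => fun x y => ∫ z, Pit P n x z * P z y ∂muI

/-- `Q_k(x,y) = Σ_{j=1}^{k} (−1)^{k−j}·(k choose j)·P^j(x,y)` (so `Qit P 0 = 0`). -/
noncomputable def Qit (P : I01 → I01 → ℝ) (k : ℕ) (x y : I01) : ℝ :=
  ∑ j ∈ Finset.Icc 1 k, (-1 : ℝ) ^ (k - j) * (k.choose j : ℝ) * Pit P (j - 1) x y

/-- `K_t(x,y) = Σ_{k=1}^{∞} (t^k/k!)·Q_k(x,y)` (the `k = 0` term of the `tsum`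
vanishes since `Qit P 0 = 0`). -/
noncomputable def Kt (P : I01 → I01 → ℝ) (t : ℝ) (x y : I01) : ℝ :=
  ∑' k : ℕ, t ^ k / (k.factorial : ℝ) * Qit P k x y


theorem muI_eq_volume : muI = (volume : Measure I01) := rfl

instance muI_prob : IsProbabilityMeasure muI := by
  rw [muI_eq_volume]; exact inferInstanceAs (IsProbabilityMeasure (volume : Measure unitInterval))

theorem Pit_continuous (P : I01 → I01 → ℝ) (hP : Continuous fun p : I01 × I01 => P p.1 p.2)
    (n : ℕ) : Continuous fun p : I01 × I01 => Pit P n p.1 p.2 := by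
  induction n with
  | zero => exact hP
  | succ n ih =>
    simp only [Pit]
    have h : Continuous fun q : (I01 × I01) × I01 => Pit P n q.1.1 q.2 * P q.2 q.1.2 := by
      have h1 : Continuous fun q : (I01 × I01) × I01 => Pit P n q.1.1 q.2 :=
        ih.comp (by fun_prop : Continuous fun q : (I01 × I01) × I01 => (q.1.1, q.2))
      have h2 : Continuous fun q : (I01 × I01) × I01 => P q.2 q.1.2 :=
        hP.comp (by fun_prop : Continuous fun q : (I01 × I01) × I01 => (q.2, q.1.2))
      exact h1.mul h2
    have := continuous_parametric_integral_of_continuous (μ := muI) (s := Set.univ)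
      (f := fun (p : I01 × I01) z => Pit P n p.1 z * P z p.2) h isCompact_univ
    simpa only [setIntegral_univ] using this

theorem cont_integrable {X : Type*} [TopologicalSpace X] [CompactSpace X] [MeasurableSpace X]
    [OpensMeasurableSpace X] (μ : Measure X) [IsFiniteMeasure μ] {f : X → ℝ}
    (hf : Continuous f) : Integrable f μ :=
  hf.integrable_of_hasCompactSupport (HasCompactSupport.of_compactSpace f)

theorem Pit_bound (P : I01 → I01 → ℝ) (M : ℝ) (hM : ∀ x y, |P x y| ≤ M)
    (n : ℕ) (x y : I01) : |Pit P n x y| ≤ M ^ (n + 1) := by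
  induction n generalizing x y with
  | zero => simpa [Pit] using hM x y
  | succ n ih =>
    simp only [Pit]
    have h := norm_integral_le_of_norm_le_const (μ := muI) (f := fun z => Pit P n x z * P z y)
      (C := M ^ (n + 1) * M) (Filter.Eventually.of_forall fun z => by
        rw [Real.norm_eq_abs, abs_mul]
        exact mul_le_mul (ih x z) (hM z y) (abs_nonneg _) ((abs_nonneg _).trans (ih x z)))
    simpa [pow_succ] using h

theorem Pit_semigroup (P : I01 → I01 → ℝ) (hP : Continuous fun p : I01 × I01 => P p.1 p.2)
    (m n : ℕ) (x y : I01) :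
    ∫ z, Pit P m x z * Pit P n z y ∂muI = Pit P (m + n + 1) x y := by
  induction n generalizing y with
  | zero => rfl
  | succ n ih =>
    have e1 : ∀ z, Pit P m x z * Pit P (n + 1) z y
        = ∫ w, Pit P m x z * (Pit P n z w * P w y) ∂muI := fun z => by
      rw [integral_const_mul]; rfl
    have hc : Continuous fun q : I01 × I01 => Pit P m x q.1 * (Pit P n q.1 q.2 * P q.2 y) := by
      have h1 : Continuous fun q : I01 × I01 => Pit P m x q.1 :=
        (Pit_continuous P hP m).comp (by fun_prop : Continuous fun q : I01 × I01 => (x, q.1))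
      have h2 : Continuous fun q : I01 × I01 => P q.2 y :=
        hP.comp (by fun_prop : Continuous fun q : I01 × I01 => (q.2, y))
      exact h1.mul ((Pit_continuous P hP n).mul h2)
    simp only [e1]
    rw [integral_integral_swap (f := fun z w => Pit P m x z * (Pit P n z w * P w y))
      (cont_integrable (muI.prod muI) hc)]
    change _ = ∫ w, Pit P (m + n + 1) x w * P w y ∂muI
    congr 1
    ext w
    rw [← ih w, ← integral_mul_const]
    congr 1
    ext z
    ring

/-- Iterated kernel with zero-th one being `0`. -/
noncomputable def pk (P : I01 → I01 → ℝ) (j : ℕ) (x y : I01) : ℝ :=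
  if j = 0 then 0 else Pit P (j - 1) x y

theorem pk_continuous (P : I01 → I01 → ℝ) (hP : Continuous fun p : I01 × I01 => P p.1 p.2)
    (n : ℕ) : Continuous fun p : I01 × I01 => pk P n p.1 p.2 := by
  unfold pk
  split_ifs
  · exact continuous_const
  · exact Pit_continuous P hP _

theorem pk_bound (P : I01 → I01 → ℝ) (M : ℝ) (hM : ∀ x y, |P x y| ≤ M)
    (n : ℕ) (x y : I01) : |pk P n x y| ≤ M ^ n := by
  cases n with
  | zero => simp [pk]
  | succ n => simpa [pk] using Pit_bound P M hM n x y

theorem pk_split (P : I01 → I01 → ℝ) (hP : Continuous fun p : I01 × I01 => P p.1 p.2)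
    (i j : ℕ) (x y : I01) :
    pk P (i + j) x y = (if i = 0 then pk P j x y else 0) + (if j = 0 then pk P i x y else 0)
      + ∫ z, pk P i x z * pk P j z y ∂muI := by
  cases i with
  | zero => cases j <;> simp [pk]
  | succ i =>
    cases j with
    | zero => simp [pk]
    | succ j =>
      have := Pit_semigroup P hP i j x y
      simp only [pk, Nat.add_eq_zero_iff, one_ne_zero, and_false, if_false,
        Nat.add_sub_cancel, zero_add]
      rw [this]
      congr 1
      omega

/-- Weighted term. -/
noncomputable def tk (P : I01 → I01 → ℝ) (t : ℝ) (j : ℕ) (x y : I01) : ℝ :=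
  t ^ j / (j.factorial : ℝ) * pk P j x y

theorem tk_bound (P : I01 → I01 → ℝ) (M : ℝ) (hM : ∀ x y, |P x y| ≤ M) (t : ℝ)
    (n : ℕ) (x y : I01) : ‖tk P t n x y‖ ≤ (|t| * M) ^ n / (n.factorial : ℝ) := by
  unfold tk
  rw [norm_mul, norm_div, norm_pow, Real.norm_eq_abs, Real.norm_eq_abs, Real.norm_eq_abs,
    Nat.abs_cast, mul_pow, mul_div_right_comm]
  exact mul_le_mul_of_nonneg_left (pk_bound P M hM n x y) (by positivity)

theorem tk_summable (P : I01 → I01 → ℝ) (M : ℝ) (hM : ∀ x y, |P x y| ≤ M) (t : ℝ)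
    (x y : I01) : Summable fun n => ‖tk P t n x y‖ :=
  Summable.of_nonneg_of_le (fun _ => norm_nonneg _) (fun n => tk_bound P M hM t n x y)
    (Real.summable_pow_div_factorial _)

theorem Kt_eq (P : I01 → I01 → ℝ) (M : ℝ) (hM : ∀ x y, |P x y| ≤ M) (t : ℝ)
    (x y : I01) : Kt P t x y = Real.exp (-t) * ∑' n, tk P t n x y := by
  have he : Real.exp (-t) = ∑' n : ℕ, (-t) ^ n / (n.factorial : ℝ) := by
    rw [Real.exp_eq_exp_ℝ, NormedSpace.exp_eq_tsum_div]
  have hs : Summable fun n : ℕ => ‖(-t) ^ n / (n.factorial : ℝ)‖ :=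
    (Real.summable_pow_div_factorial (-t)).norm
  rw [he, mul_comm, tsum_mul_tsum_eq_tsum_sum_range_of_summable_norm
    (tk_summable P M hM t x y) hs, Kt]
  congr 1
  ext k
  rw [Finset.range_eq_Ico, Finset.sum_eq_sum_Ico_succ_bot (Nat.succ_pos k)]
  have h0 : tk P t 0 x y = 0 := by simp [tk, pk]
  rw [h0, zero_mul, zero_add, Qit, Finset.mul_sum]
  apply Finset.sum_congr
  · ext a; simp [Nat.one_le_iff_ne_zero]
  · intro j hj
    obtain ⟨h1, h2⟩ := Finset.mem_Ico.mp hj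
    have h3 : j ≤ k := by omega
    obtain ⟨i, rfl⟩ := Nat.exists_eq_add_of_le h3
    have hj0 : j ≠ 0 := by omega
    rw [Nat.cast_add_choose]
    simp only [tk, pk, hj0, if_false, Nat.add_sub_cancel_left, neg_pow t i]
    field_simp
    ring

set_option maxHeartbeats 2000000 in
theorem A_relation
    (P : I01 → I01 → ℝ) (hP : Continuous fun p : I01 × I01 => P p.1 p.2)
    (M : ℝ) (hM : ∀ x y, |P x y| ≤ M) (s t : ℝ) (x y : I01) :
    ∑' n, tk P (s + t) n x y = ∑' n, tk P s n x y + ∑' n, tk P t n x y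
      + ∫ z, (∑' n, tk P t n x z) * (∑' n, tk P s n z y) ∂muI := by
  have cont1 : ∀ i, Continuous fun z => tk P t i x z := fun i =>
    continuous_const.mul ((pk_continuous P hP i).comp
      (by fun_prop : Continuous fun z : I01 => (x, z)))
  have cont2 : ∀ i, Continuous fun z => tk P s i z y := fun i =>
    continuous_const.mul ((pk_continuous P hP i).comp
      (by fun_prop : Continuous fun z : I01 => (z, y)))
  have hbs : Summable fun q : ℕ × ℕ => (|t| * M) ^ q.1 / (q.1.factorial : ℝ)
      * ((|s| * M) ^ q.2 / (q.2.factorial : ℝ)) :=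
    summable_mul_of_summable_norm (Real.summable_pow_div_factorial _).norm
      (Real.summable_pow_div_factorial _).norm
  have hM0 : 0 ≤ M := (abs_nonneg _).trans (hM x y)
  have hnb : ∀ (q : ℕ × ℕ) z, ‖tk P t q.1 x z * tk P s q.2 z y‖ ≤
      (|t| * M) ^ q.1 / (q.1.factorial : ℝ) * ((|s| * M) ^ q.2 / (q.2.factorial : ℝ)) :=
    fun q z => by
      rw [norm_mul]
      exact mul_le_mul (tk_bound P M hM t _ _ _) (tk_bound P M hM s _ _ _) (norm_nonneg _)
        (by positivity)
  have hG := hasSum_integral_of_summable_integral_norm (μ := muI)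
    (F := fun (q : ℕ × ℕ) z => tk P t q.1 x z * tk P s q.2 z y)
    (fun q => cont_integrable muI ((cont1 q.1).mul (cont2 q.2)))
    (Summable.of_nonneg_of_le (fun q => integral_nonneg fun z => norm_nonneg _)
      (fun q => by
        have := integral_mono (μ := muI)
          (cont_integrable muI ((cont1 q.1).mul (cont2 q.2)).norm) (integrable_const _)
          (hnb q)
        simpa using this) hbs)
  have hprod : ∀ z, (∑' n, tk P t n x z) * (∑' n, tk P s n z y)
      = ∑' q : ℕ × ℕ, tk P t q.1 x z * tk P s q.2 z y := fun z =>
    tsum_mul_tsum_of_summable_norm (tk_summable P M hM t x z) (tk_summable P M hM s z y)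
  simp only [← hprod] at hG
  have hA1 : HasSum (fun q : ℕ × ℕ => if q.1 = 0 then tk P s q.2 x y else 0)
      (∑' n, tk P s n x y) := by
    have h := (tk_summable P M hM s x y).of_norm.hasSum
    have hi : Function.Injective (fun n : ℕ => ((0 : ℕ), n)) := fun a b h => by simpa using h
    rw [← hi.hasSum_iff]
    · simpa [Function.comp_def] using h
    · rintro ⟨a, b⟩ hab
      rw [if_neg]
      rintro rfl
      exact hab ⟨b, rfl⟩
  have hA2 : HasSum (fun q : ℕ × ℕ => if q.2 = 0 then tk P t q.1 x y else 0)
      (∑' n, tk P t n x y) := by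
    have h := (tk_summable P M hM t x y).of_norm.hasSum
    have hi : Function.Injective (fun n : ℕ => (n, (0 : ℕ))) := fun a b h => by simpa using h
    rw [← hi.hasSum_iff]
    · simpa [Function.comp_def] using h
    · rintro ⟨a, b⟩ hab
      rw [if_neg]
      rintro rfl
      exact hab ⟨a, rfl⟩
  have hF := (hA1.add hA2).add hG
  have hFeq : ∀ q : ℕ × ℕ, ((if q.1 = 0 then tk P s q.2 x y else 0)
      + (if q.2 = 0 then tk P t q.1 x y else 0)) + ∫ z, tk P t q.1 x z * tk P s q.2 z y ∂muI
      = t ^ q.1 / (q.1.factorial : ℝ) * (s ^ q.2 / (q.2.factorial : ℝ))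
        * pk P (q.1 + q.2) x y := by
    rintro ⟨i, j⟩
    have e : ∀ z, tk P t i x z * tk P s j z y
        = (t ^ i / (i.factorial : ℝ) * (s ^ j / (j.factorial : ℝ)))
          * (pk P i x z * pk P j z y) := fun z => by simp only [tk]; ring
    simp only [e, integral_const_mul]
    rw [pk_split P hP i j x y, mul_add, mul_add]
    congr 2
    · split_ifs with h
      · subst h; simp [tk]
      · simp
    · split_ifs with h
      · subst h; simp [tk]
      · simp
  simp only [hFeq] at hF
  rw [← hF.tsum_eq]
  rw [← (Finset.HasAntidiagonal.sigmaAntidiagonalEquivProd : (Σ n : ℕ, Finset.HasAntidiagonal.antidiagonal n) ≃ ℕ × ℕ).tsum_eq]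
  have hsum := (Finset.HasAntidiagonal.sigmaAntidiagonalEquivProd : (Σ n : ℕ, Finset.HasAntidiagonal.antidiagonal n) ≃ ℕ × ℕ).summable_iff.mpr hF.summable
  have hts := Summable.tsum_sigma' (fun n => (hasSum_fintype _).summable) hsum
  simp only [Function.comp_def] at hts
  rw [hts]
  congr 1
  ext n
  rw [tsum_fintype, Finset.univ_eq_attach]
  simp only [Finset.HasAntidiagonal.sigmaAntidiagonalEquivProd_apply]
  rw [Finset.sum_attach (Finset.HasAntidiagonal.antidiagonal n) (fun q : ℕ × ℕ =>
    t ^ q.1 / (q.1.factorial : ℝ) * (s ^ q.2 / (q.2.factorial : ℝ)) * pk P (q.1 + q.2) x y)]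
  rw [tk, add_comm s t, (Commute.all t s).add_pow', Finset.sum_div, Finset.sum_mul]
  apply Finset.sum_congr rfl
  rintro ⟨i, j⟩ hij
  obtain rfl := Finset.HasAntidiagonal.mem_antidiagonal.mp hij
  simp only [nsmul_eq_mul]
  rw [Nat.cast_add_choose]
  field_simp

/-- Appendix 1 of the paper: the Chapman–Kolmogorov-type relation
`K_{s+t}(x,y) = e^{−t}·K_s(x,y) + e^{−s}·K_t(x,y) + ∫₀¹ K_t(x,z)·K_s(z,y) dz`. -/
theorem Kt_chapman_kolmogorov
    (P : I01 → I01 → ℝ) (hP : Continuous fun p : I01 × I01 => P p.1 p.2)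
    (s t : ℝ) (hs : 0 ≤ s) (ht : 0 ≤ t) (x y : I01) :
    Kt P (s + t) x y
      = Real.exp (-t) * Kt P s x y + Real.exp (-s) * Kt P t x y
        + ∫ z, Kt P t x z * Kt P s z y ∂muI := by
  obtain ⟨M, hM'⟩ := isCompact_univ.exists_bound_of_continuousOn hP.continuousOn
  have hM : ∀ x y, |P x y| ≤ M := fun x y => hM' (x, y) (Set.mem_univ _)
  have e : ∀ z, Kt P t x z * Kt P s z y = (Real.exp (-t) * Real.exp (-s)) *
      ((∑' n, tk P t n x z) * (∑' n, tk P s n z y)) := fun z => by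
    rw [Kt_eq P M hM, Kt_eq P M hM]; ring
  simp only [e, integral_const_mul]
  rw [Kt_eq P M hM, Kt_eq P M hM, Kt_eq P M hM, A_relation P hP M hM, neg_add, Real.exp_add]
  ring
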